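/- Let S(l,r) be the signed double star consisting of a positive central edge z₁z₂, together with l positive pendant edges z₁v₁,…,z₁v_l and two negative pendant edges z₁u₁, z₁u₂ attached at z₁, and r positive pendant edges z₂w₁,…,z₂w_r attached at z₂ (so S(l,r) is a (l+r+4, l+r+1, 2) signed graph). If l ≥ 2, r ≥ 2, and l is even, then S(l,r) is additively graceful. -/

import Mathlib

/-- A signed graph on vertex type `V`: a finite set of positive edges and a
finite set of negative edges, disjoint from one another, with no loops. -/
structure SignedGraph (V : Type) [DecidableEq V] where
  posEdges : Finset (Sym2 V)
  negEdges : Finset (Sym2 V)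
  disjoint : Disjoint posEdges negEdges
  pos_not_diag : ∀ e ∈ posEdges, ¬ e.IsDiag
  neg_not_diag : ∀ e ∈ negEdges, ¬ e.IsDiag

/-- Induced label on a positive edge: `|f u - f v|`. -/
def posLabel {V : Type} (f : V → ℕ) : Sym2 V → ℕ :=
  Sym2.lift ⟨fun u v => Nat.dist (f u) (f v), fun u v => Nat.dist_comm _ _⟩

/-- Induced label on a negative edge: `f u + f v`. -/
def negLabel {V : Type} (f : V → ℕ) : Sym2 V → ℕ :=
  Sym2.lift ⟨fun u v => f u + f v, fun u v => Nat.add_comm _ _⟩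

/-- `f` is an additively graceful labeling of the signed graph `S`:
it is an injection into `{0, 1, …, m + ⌈(n+1)/2⌉}` whose induced labels on the
positive edges are exactly `{1, …, m}` and on the negative edges exactly
`{1, …, n}`, where `m` (resp. `n`) is the number of positive (negative) edges.
(Note that `⌈(n+1)/2⌉ = (n+2)/2` with natural-number division.) -/
def IsAddGraceful {V : Type} [DecidableEq V] (S : SignedGraph V) (f : V → ℕ) : Prop :=
  Function.Injective f ∧
  (∀ v : V, f v ≤ S.posEdges.card + (S.negEdges.card + 2) / 2) ∧
  S.posEdges.image (posLabel f) = Finset.Icc 1 S.posEdges.card ∧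
  S.negEdges.image (negLabel f) = Finset.Icc 1 S.negEdges.card

/-- Vertex type of a double star: the two centers `z₁, z₂`, the `a` positive
pendant neighbours and `b` negative pendant neighbours of `z₁`, and the `c`
positive pendant neighbours of `z₂`. -/
abbrev DSV (a b c : ℕ) : Type := (Unit ⊕ Unit) ⊕ (Fin a ⊕ Fin b ⊕ Fin c)

/-- the first central vertex `z₁` -/
def z1 {a b c : ℕ} : DSV a b c := Sum.inl (Sum.inl ())
/-- the second central vertex `z₂` -/
def z2 {a b c : ℕ} : DSV a b c := Sum.inl (Sum.inr ())
/-- the end `vᵢ` of the `i`-th positive pendant edge at `z₁` -/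
def vv {a b c : ℕ} (i : Fin a) : DSV a b c := Sum.inr (Sum.inl i)
/-- the end `uᵢ` of the `i`-th negative pendant edge at `z₁` -/
def uu {a b c : ℕ} (i : Fin b) : DSV a b c := Sum.inr (Sum.inr (Sum.inl i))
/-- the end `wᵢ` of the `i`-th positive pendant edge at `z₂` -/
def ww {a b c : ℕ} (i : Fin c) : DSV a b c := Sum.inr (Sum.inr (Sum.inr i))

/-- The signed double star with a *positive* central edge `z₁z₂`,
`a` positive and `b` negative pendant edges at `z₁`, and `c` positive pendant
edges at `z₂`. -/
def doubleStarPos (a b c : ℕ) : SignedGraph (DSV a b c) where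
  posEdges :=
    {s(z1, z2)} ∪ Finset.univ.image (fun i : Fin a => s(z1, vv i)) ∪
      Finset.univ.image (fun i : Fin c => s(z2, ww i))
  negEdges := Finset.univ.image (fun i : Fin b => s(z1, uu i))
  disjoint := by
    rw [Finset.disjoint_left]
    intro e he1 he2
    simp only [Finset.mem_union, Finset.mem_singleton, Finset.mem_image,
      Finset.mem_univ, true_and] at he1 he2
    obtain ⟨j, rfl⟩ := he2
    rcases he1 with (h | ⟨i, h⟩) | ⟨i, h⟩ <;>
      simp [z1, z2, vv, uu, ww, Sym2.eq_iff] at h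
  pos_not_diag := by
    intro e he
    simp only [Finset.mem_union, Finset.mem_singleton, Finset.mem_image,
      Finset.mem_univ, true_and] at he
    rcases he with (rfl | ⟨i, rfl⟩) | ⟨i, rfl⟩ <;>
      simp [z1, z2, vv, ww, Sym2.mk_isDiag_iff]
  neg_not_diag := by
    intro e he
    simp only [Finset.mem_image, Finset.mem_univ, true_and] at he
    obtain ⟨i, rfl⟩ := he
    simp [z1, uu, Sym2.mk_isDiag_iff]

/-!
With two negative edges a signed tree has exactly as many vertices as there are available labels, so
a labeling that is onto the labels, with induced edge labelings that are onto as well, is additively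
graceful.

Write `m = l + r + 1` for the number of positive edges and put `f z₁ = 0`, `f z₂ = m`. The two
negative edges force the labels `1, 2` on their ends, and a positive edge at `z₁` carries the label
of its other end. The edge labels `1, 2` then have to occur at `z₂`, where the end labels `m + 1`
and `m + 2` produce them. The remaining `r - 2` ends at `z₂` receive a set `C ⊆ [3, m - 3]` that is
invariant under `x ↦ m - x`, so that their edges carry exactly the labels in `C`; the ends of the
positive edges at `z₁` receive the rest of `[3, m - 1]`. Such a `C` exists as soon as `r - 2` or the
size `l - 2` of its complement in `[3, m - 3]` is even.
-/

section

open Finset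

section SignedGraph

variable {V : Type} [DecidableEq V]

theorem isAddGraceful_of_subset_image [Fintype V] {S : SignedGraph V} {f : V → ℕ}
    (hcard : Fintype.card V ≤ #S.posEdges + (#S.negEdges + 2) / 2 + 1)
    (hvert : range (#S.posEdges + (#S.negEdges + 2) / 2 + 1) ⊆ univ.image f)
    (hpos : Icc 1 #S.posEdges ⊆ S.posEdges.image (posLabel f))
    (hneg : Icc 1 #S.negEdges ⊆ S.negEdges.image (negLabel f)) :
    IsAddGraceful S f := by
  have himage : range (#S.posEdges + (#S.negEdges + 2) / 2 + 1) = univ.image f :=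
    eq_of_subset_of_card_le hvert <| card_image_le.trans <| by simpa using hcard
  refine ⟨?_, fun v ↦ ?_, ?_, ?_⟩
  · rw [← Set.injOn_univ, ← coe_univ, ← card_image_iff]
    exact card_image_le.antisymm <| by simpa [← himage] using hcard
  · have : f v ∈ univ.image f := mem_image_of_mem f (mem_univ v)
    rw [← himage, mem_range] at this
    exact Nat.lt_succ_iff.mp this
  · exact (eq_of_subset_of_card_le hpos <| by simpa using card_image_le).symm
  · exact (eq_of_subset_of_card_le hneg <| by simpa using card_image_le).symm

end SignedGraph

section DoubleStar

variable {a b c : ℕ}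

variable (a b c) in
theorem card_posEdges_doubleStarPos : #(doubleStarPos a b c).posEdges = a + c + 1 := by
  have hv : Function.Injective fun i : Fin a ↦ s((z1 : DSV a b c), vv i) := fun i j h ↦ by
    simpa [z1, vv] using h
  have hw : Function.Injective fun i : Fin c ↦ s((z2 : DSV a b c), ww i) := fun i j h ↦ by
    simpa [z2, ww] using h
  rw [doubleStarPos, card_union_of_disjoint, card_union_of_disjoint, card_singleton,
    card_image_of_injective _ hv, card_image_of_injective _ hw, card_fin, card_fin]
  · ring
  · simp [z1, z2, vv]
  · simp [disjoint_left, z1, z2, vv, ww]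

variable (a b c) in
theorem card_negEdges_doubleStarPos : #(doubleStarPos a b c).negEdges = b := by
  have hu : Function.Injective fun i : Fin b ↦ s((z1 : DSV a b c), uu i) := fun i j h ↦ by
    simpa [z1, uu] using h
  rw [doubleStarPos, card_image_of_injective _ hu, card_fin]

theorem image_posLabel_doubleStarPos (f : DSV a b c → ℕ) :
    (doubleStarPos a b c).posEdges.image (posLabel f) =
      {Nat.dist (f z1) (f z2)} ∪ (univ.image (f ∘ vv)).image (Nat.dist (f z1)) ∪
        (univ.image (f ∘ ww)).image (Nat.dist (f z2)) := by
  simp only [doubleStarPos, image_union, image_singleton, image_image]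
  rfl

theorem image_negLabel_doubleStarPos (f : DSV a b c → ℕ) :
    (doubleStarPos a b c).negEdges.image (negLabel f) =
      (univ.image (f ∘ uu)).image (f z1 + ·) := by
  simp only [doubleStarPos, image_image]
  rfl

theorem image_univ_doubleStar (f : DSV a b c → ℕ) :
    univ.image f = {f z1, f z2} ∪
      (univ.image (f ∘ vv) ∪ (univ.image (f ∘ uu) ∪ univ.image (f ∘ ww))) := by
  ext x
  simp [z1, z2, vv, uu, ww, Unique.exists_iff, eq_comm, or_assoc]

theorem exists_labeling_doubleStar {A B C : Finset ℕ} (p q : ℕ)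
    (hA : #A = a) (hB : #B = b) (hC : #C = c) :
    ∃ f : DSV a b c → ℕ, f z1 = p ∧ f z2 = q ∧
      univ.image (f ∘ vv) = A ∧ univ.image (f ∘ uu) = B ∧ univ.image (f ∘ ww) = C :=
  ⟨Sum.elim (Sum.elim (fun _ ↦ p) (fun _ ↦ q)) <|
      Sum.elim (A.orderEmbOfFin hA) <| Sum.elim (B.orderEmbOfFin hB) (C.orderEmbOfFin hC),
    rfl, rfl, A.image_orderEmbOfFin_univ hA, B.image_orderEmbOfFin_univ hB,
    C.image_orderEmbOfFin_univ hC⟩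

theorem exists_isAddGraceful_doubleStarPos_of_labelSets {A B C : Finset ℕ} {p q : ℕ} (hb : b ≤ 2)
    (hA : #A = a) (hB : #B = b) (hC : #C = c)
    (hvert : range (a + c + 1 + (b + 2) / 2 + 1) ⊆ {p, q} ∪ (A ∪ (B ∪ C)))
    (hpos : Icc 1 (a + c + 1) ⊆ {Nat.dist p q} ∪ A.image (Nat.dist p) ∪ C.image (Nat.dist q))
    (hneg : Icc 1 b ⊆ B.image (p + ·)) :
    ∃ f : DSV a b c → ℕ, IsAddGraceful (doubleStarPos a b c) f := by
  obtain ⟨f, rfl, rfl, rfl, rfl, rfl⟩ := exists_labeling_doubleStar p q hA hB hC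
  refine ⟨f, isAddGraceful_of_subset_image ?_ ?_ ?_ ?_⟩
  · rw [card_posEdges_doubleStarPos, card_negEdges_doubleStarPos]
    simp only [Fintype.card_sum, Fintype.card_unit, Fintype.card_fin]
    omega
  · rwa [card_posEdges_doubleStarPos, card_negEdges_doubleStarPos, image_univ_doubleStar]
  · rwa [card_posEdges_doubleStarPos, image_posLabel_doubleStarPos]
  · rwa [card_negEdges_doubleStarPos, image_negLabel_doubleStarPos]

end DoubleStar

theorem Icc_subset_posLabels_of_reflection_mem {n : ℕ} {C : Finset ℕ}
    (hrefl : ∀ x ∈ C, n + 1 - x ∈ C) :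
    Icc 1 (n + 1) ⊆ {Nat.dist 0 (n + 1)} ∪ (Icc 3 n \ C).image (Nat.dist 0) ∪
      (C ∪ {n + 2, n + 3}).image (Nat.dist (n + 1)) := by
  intro x hx
  obtain ⟨hx₁, hxn⟩ := mem_Icc.mp hx
  simp only [mem_union, mem_singleton, mem_image, mem_sdiff, mem_insert]
  rcases hxn.eq_or_lt with rfl | hlt
  · simp [Nat.dist]
  by_cases hxC : x ∈ C
  · exact .inr ⟨n + 1 - x, .inl (hrefl x hxC), by rw [Nat.dist]; omega⟩
  rcases Nat.lt_or_ge x 3 with hsmall | hge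
  · exact .inr ⟨n + 1 + x, by omega, by rw [Nat.dist]; omega⟩
  · exact .inl <| .inr ⟨x, ⟨mem_Icc.mpr (by omega), hxC⟩, by simp [Nat.dist]⟩

theorem exists_isAddGraceful_doubleStarPos_two_of_reflection_mem {l r : ℕ} {C : Finset ℕ}
    (hC : C ⊆ Icc 3 (l + r - 2)) (hcard : #C + 2 = r) (hrefl : ∀ x ∈ C, l + r + 1 - x ∈ C) :
    ∃ f : DSV l 2 r → ℕ, IsAddGraceful (doubleStarPos l 2 r) f := by
  have hC' : C ⊆ Icc 3 (l + r) := hC.trans <| Icc_subset_Icc_right (Nat.sub_le _ _)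
  have hv : #(Icc 3 (l + r) \ C) = l := by
    rw [card_sdiff_of_subset hC', Nat.card_Icc]
    omega
  have hdisj : Disjoint C {l + r + 2, l + r + 3} := disjoint_left.mpr fun x hx hx' ↦ by
    have := mem_Icc.mp (hC' hx)
    simp only [mem_insert, mem_singleton] at hx'
    omega
  have hw : #(C ∪ {l + r + 2, l + r + 3}) = r := by
    rw [card_union_of_disjoint hdisj, card_pair (by omega), hcard]
  have hvert : range (l + r + 1 + (2 + 2) / 2 + 1) ⊆
      {0, l + r + 1} ∪ (Icc 3 (l + r) \ C ∪ ({1, 2} ∪ (C ∪ {l + r + 2, l + r + 3}))) := by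
    intro x hx
    simp only [mem_range] at hx
    simp only [mem_union, mem_insert, mem_singleton, mem_sdiff, mem_Icc]
    by_cases hxC : x ∈ C
    · simp [hxC]
    · simp only [hxC, not_false_eq_true, and_true, false_or]
      omega
  exact exists_isAddGraceful_doubleStarPos_of_labelSets le_rfl hv rfl hw hvert
    (Icc_subset_posLabels_of_reflection_mem hrefl) (by decide)

theorem exists_subset_Icc_card_eq_and_reflection_mem {p q n k : ℕ} (hq : p + n + k = q + 1)
    (h : Even n ∨ Even k) :
    ∃ s ⊆ Icc p q, #s = n ∧ ∀ x ∈ s, p + q - x ∈ s := by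
  rcases h with ⟨d, rfl⟩ | ⟨d, rfl⟩
  · refine ⟨Ico p (p + d) ∪ Ico (p + d + k) (q + 1), fun x hx ↦ ?_, ?_, fun x hx ↦ ?_⟩
    · simp only [mem_union, mem_Ico, mem_Icc] at hx ⊢
      omega
    · rw [card_union_of_disjoint, Nat.card_Ico, Nat.card_Ico]
      · omega
      · exact disjoint_left.mpr fun x hx hx' ↦ by simp only [mem_Ico] at hx hx'; omega
    · simp only [mem_union, mem_Ico] at hx ⊢
      omega
  · refine ⟨Ico (p + d) (p + d + n), fun x hx ↦ ?_, by simp, fun x hx ↦ ?_⟩ <;>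
      simp only [mem_Ico, mem_Icc] at hx ⊢ <;> omega

theorem doubleStar_twoNeg_addGraceful_of_even_l_general {l r : ℕ} (hl : 2 ≤ l) (hr : 2 ≤ r)
    (h : Even l ∨ Even r) :
    ∃ f : DSV l 2 r → ℕ, IsAddGraceful (doubleStarPos l 2 r) f := by
  obtain ⟨C, hC, hcard, hrefl⟩ := exists_subset_Icc_card_eq_and_reflection_mem
    (p := 3) (q := l + r - 2) (n := r - 2) (k := l - 2) (by omega) <|
      h.symm.imp (·.tsub even_two) (·.tsub even_two)
  refine exists_isAddGraceful_doubleStarPos_two_of_reflection_mem hC (by omega) fun x hx ↦ ?_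
  convert hrefl x hx using 1
  omega

end

/-- The signed double star with positive central edge `z₁z₂`,
`l` positive and `2` negative pendant edges at `z₁`, and `r` positive pendant
edges at `z₂`, is additively graceful when `l ≥ 2`, `r ≥ 2` and `l` is even. -/
theorem doubleStar_twoNeg_addGraceful_of_even_l (l r : ℕ) (hl : 2 ≤ l) (hr : 2 ≤ r)
    (hle : Even l) :
    ∃ f : DSV l 2 r → ℕ, IsAddGraceful (doubleStarPos l 2 r) f :=
  doubleStar_twoNeg_addGraceful_of_even_l_general hl hr (.inl hle)
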